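/- arXiv:1602.08457 — 2 statements merged into one kernel-verified Lean document; each statement's English description precedes it below -/
import Mathlib

section
/- Let M ≥ 0, N ≥ 1, k ∈ I_{M,N} and r ∈ {1,…,N}. For every t ∈ ℂ^N such that θ(φ_{k;r'} e^{2 t_{r'}}) ≠ 0 for all r' ∈ {1,…,N} and θ(φ_{k;r} e^{2(t_r+τ)}) ≠ 0, one has Φ_k(t + τ e_r) = φ_{k;r} · Φ_k(t), where e_r is the r-th standard basis vector of ℂ^N. In particular the explicit theta quotient Φ_k solves the scalar difference equations Φ(t + τ e_r) = φ_{k;r} Φ(t) for r ∈ {1,…,N}. -/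
open Complex MeasureTheory

noncomputable section

namespace BQKZ

/-- `(z;p)_∞ = ∏_{m ≥ 0} (1 - z pᵐ)`; used with `p = q²`. -/
def poch (p z : ℂ) : ℂ := ∏' m : ℕ, (1 - z * p ^ m)

/-- renormalized Jacobi theta `θ(z) = (z;p)_∞ (p z⁻¹;p)_∞`, with `p = q²`. -/
def theta (p z : ℂ) : ℂ := poch p z * poch p (p * z⁻¹)

/-- `q² = e^{2τ}` where `q = e^τ`. -/
def qsq (τ : ℂ) : ℂ := exp (2 * τ)

/-- `ξ̃₊ = ξ₊ - η/2 - τ/2`. -/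
def xiP (τ η ξp : ℂ) : ℂ := ξp - η / 2 - τ / 2

/-- `ξ̃₋ = ξ₋ - η/2`. -/
def xiM (η ξm : ℂ) : ℂ := ξm - η / 2

/-- `n_k(r) = #{i : k i = r}`. -/
def nk {M N : ℕ} (k : Fin M → Fin N) (r : Fin N) : ℕ :=
  (Finset.univ.filter fun i => k i = r).card

/-- `φ_{k;r}`. -/
def phiC (η ξp ξm : ℂ) {N M : ℕ} (ℓ : Fin N → ℂ) (k : Fin M → Fin N) (r : Fin N) : ℂ :=
  (∏ i ∈ Finset.univ.filter fun i : Fin M => k i = r,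
      exp (2 * (η - ξp - ξm) +
        4 * ((M : ℂ) - ((i : ℕ) + 1) - ∑ s ∈ Finset.univ.filter fun s : Fin N => r ≤ s, ℓ s) * η)) *
    exp (-4 * ℓ r * η * ((Finset.univ.filter fun i : Fin M => r < k i).card : ℂ))

/-- `Φ_k(t)`. -/
def PhiF (τ η ξp ξm : ℂ) {N M : ℕ} (ℓ : Fin N → ℂ) (k : Fin M → Fin N) (t : Fin N → ℂ) : ℂ :=
  ∏ r, theta (qsq τ) (exp (2 * t r)) / theta (qsq τ) (phiC η ξp ξm ℓ k r * exp (2 * t r))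

/-- `F(x;t)`. -/
def Ffun (τ η : ℂ) {N : ℕ} (ℓ : Fin N → ℂ) (x : ℂ) (t : Fin N → ℂ) : ℂ :=
  ∏ s, (poch (qsq τ) (exp (-2 * (t s + x - ℓ s * η))) * poch (qsq τ) (exp (-2 * (t s - x - ℓ s * η)))) /
       (poch (qsq τ) (exp (-2 * (t s + x + ℓ s * η))) * poch (qsq τ) (exp (-2 * (t s - x + ℓ s * η))))

/-- `g(x)`. -/
def gfun (τ η ξp ξm : ℂ) (x : ℂ) : ℂ :=
  (poch (qsq τ) (qsq τ * exp (2 * (xiP τ η ξp - x))) * poch (qsq τ) (qsq τ * exp (2 * (xiM η ξm - x)))) /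
  (poch (qsq τ) (exp (2 * (-xiP τ η ξp - x))) * poch (qsq τ) (exp (2 * (-xiM η ξm - x))))

/-- `h(x)`. -/
def hfun (τ η : ℂ) (x : ℂ) : ℂ :=
  (1 - exp (-2 * x)) * poch (qsq τ) (qsq τ * exp (-2 * (x + η))) / poch (qsq τ) (exp (-2 * (x - η)))

/-- `ψ_{k;i}`. -/
def psiC (τ η ξp ξm : ℂ) {N M : ℕ} (ℓ : Fin N → ℂ) (k : Fin M → Fin N) (i : Fin M) : ℂ :=
  xiP τ η ξp + xiM η ξm + τ + ℓ (k i) * η +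
    2 * ((∑ s ∈ Finset.univ.filter fun s : Fin N => k i < s, ℓ s) - (M : ℂ) + ((i : ℕ) + 1)) * η

/-- `u_{k;i}(x;t)`. -/
def ufun (τ η ξp ξm : ℂ) {N M : ℕ} (ℓ : Fin N → ℂ) (k : Fin M → Fin N) (i : Fin M) (x : ℂ)
    (t : Fin N → ℂ) : ℂ :=
  exp (-t (k i)) * theta (qsq τ) (exp (2 * (x - t (k i) + psiC τ η ξp ξm ℓ k i))) *
    (∏ s ∈ Finset.univ.filter fun s : Fin N => k i < s,
      theta (qsq τ) (exp (2 * (x - t s - ℓ s * η)))) /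
    ∏ s ∈ Finset.univ.filter fun s : Fin N => k i ≤ s,
      theta (qsq τ) (exp (2 * (x - t s + ℓ s * η)))

/-- `w_k(x;t)/Φ_k(t)` (the weight function with the `Φ_k` prefactor cancelled). -/
def w0 (τ η ξp ξm : ℂ) {N M : ℕ} (ℓ : Fin N → ℂ) (k : Fin M → Fin N) (x : Fin M → ℂ)
    (t : Fin N → ℂ) : ℂ :=
  (∏ i, Ffun τ η ℓ (x i) t * gfun τ η ξp ξm (x i) * ufun τ η ξp ξm ℓ k i (x i) t) *
    ∏ p ∈ Finset.univ.filter fun p : Fin M × Fin M => p.1 < p.2,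
      hfun τ η (x p.1 + x p.2) * hfun τ η (x p.1 - x p.2)

/-- the weight function `w_k(x;t)`. -/
def wfun (τ η ξp ξm : ℂ) {N M : ℕ} (ℓ : Fin N → ℂ) (k : Fin M → Fin N) (x : Fin M → ℂ)
    (t : Fin N → ℂ) : ℂ :=
  PhiF τ η ξp ξm ℓ k t * w0 τ η ξp ξm ℓ k x t

/-- sign `ε_i = ±1` encoded by a boolean. -/
def sg {M : ℕ} (ε : Fin M → Bool) (i : Fin M) : ℂ := if ε i then 1 else -1

/-- `S_M k`: rearrangements of `k`. -/
def rearr {M N : ℕ} (k : Fin M → Fin N) : Finset (Fin M → Fin N) :=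
  Finset.univ.filter fun m => ∀ r, nk m r = nk k r

/-- `β_k(x;t)`, the coefficients of the boundary Bethe vectors. -/
def betaF (η ξm : ℂ) {N M : ℕ} (ℓ : Fin N → ℂ) (k : Fin M → Fin N) (x : Fin M → ℂ)
    (t : Fin N → ℂ) : ℂ :=
  exp ((∑ i, ((nk k (k i) : ℂ) / 2 - ℓ (k i))) * η) *
    ∑ m ∈ rearr k, ∑ ε : Fin M → Bool,
      (∏ i,
          sg ε i * sinh (sg ε i * x i - xiM η ξm) / sinh (t (m i) + sg ε i * x i - ℓ (m i) * η) *
            (∏ s ∈ Finset.univ.filter fun s : Fin N => m i < s,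
              sinh (t s + sg ε i * x i + ℓ s * η) / sinh (t s + sg ε i * x i - ℓ s * η)) *
            ∏ s, sinh (t s - sg ε i * x i + ℓ s * η) / sinh (t s - sg ε i * x i - ℓ s * η)) *
        (∏ p ∈ Finset.univ.filter fun p : Fin M × Fin M => p.1 < p.2,
          sinh (sg ε p.1 * x p.1 + sg ε p.2 * x p.2 + η) /
            sinh (sg ε p.1 * x p.1 + sg ε p.2 * x p.2)) *
        ∏ p ∈ Finset.univ.filter fun p : Fin M × Fin M => m p.1 < m p.2,
          sinh (sg ε p.1 * x p.1 - sg ε p.2 * x p.2 - η) /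
            sinh (sg ε p.1 * x p.1 - sg ε p.2 * x p.2)

/-- `(ℓ,η) ∈ D^k_{M,N}`. -/
def Dmn (η : ℂ) {N M : ℕ} (ℓ : Fin N → ℂ) (k : Fin M → Fin N) : Prop :=
  ∀ r, (ℓ r * η).re > max 0 (((nk k r : ℝ) - 1) / 2 * η.re)

/-- the (0-based) position `i_k(s;r) = ∑_{s' < r} n_k(s') + s`. -/
def blockIdx {M N : ℕ} (k : Fin M → Fin N) (r : Fin N) (s : ℕ) : ℕ :=
  (∑ s' ∈ Finset.univ.filter fun s' : Fin N => s' < r, nk k s') + s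

/-- `γ ∈ Γ^k_{M,N}`. -/
def Gam (η : ℂ) {N M : ℕ} (ℓ : Fin N → ℂ) (k : Fin M → Fin N) (γ : Fin M → ℂ) : Prop :=
  (∀ i, -(ℓ (k i) * η).re < (γ i).re ∧ (γ i).re < (ℓ (k i) * η).re) ∧
    ∀ r : Fin N, ∀ s : ℕ, s + 1 < nk k r →
      ∀ (h1 : blockIdx k r s < M) (h2 : blockIdx k r (s + 1) < M),
        (γ ⟨blockIdx k r (s + 1), h2⟩).re ≤ (γ ⟨blockIdx k r s, h1⟩).re ∧
          (γ ⟨blockIdx k r (s + 1), h2⟩).re + η.re < (γ ⟨blockIdx k r s, h1⟩).re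

/-- `γ ∈ Γ^k_{M,N;τ}`. -/
def GamTau (τ η : ℂ) {N M : ℕ} (ℓ : Fin N → ℂ) (k : Fin M → Fin N) (γ : Fin M → ℂ) : Prop :=
  Gam η ℓ k γ ∧
    (∀ i, -(ℓ (k i) * η + τ).re < (γ i).re ∧ (γ i).re < (ℓ (k i) * η + τ).re) ∧
    ∀ r : Fin N, ∀ s : ℕ, s + 1 < nk k r →
      ∀ (h1 : blockIdx k r s < M) (h2 : blockIdx k r (s + 1) < M),
        (γ ⟨blockIdx k r (s + 1), h2⟩).re + (η - τ).re < (γ ⟨blockIdx k r s, h1⟩).re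

/-- `Λ₊ = max_s Re(ℓ_s η)`. -/
def Lam (η : ℂ) {N : ℕ} (ℓ : Fin N → ℂ) : ℝ := ⨆ s, (ℓ s * η).re

/-- the sector `Ã`. -/
def Atil (τ η ξp ξm : ℂ) {N : ℕ} (ℓ : Fin N → ℂ) : Set (Fin N → ℂ) :=
  {t | (∀ i j : Fin N, (j : ℕ) = (i : ℕ) + 1 → (t i - t j).re > 2 * Lam η ℓ + max η.re 0) ∧
       ∀ i : Fin N, (i : ℕ) = N - 1 →
         (t i).re > Lam η ℓ + max (max (η / 2).re 0) (max (-xiP τ η ξp).re (-xiM η ξm).re)}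

/-- the sector `Ã_τ`. -/
def AtilTau (τ η ξp ξm : ℂ) {N : ℕ} (ℓ : Fin N → ℂ) : Set (Fin N → ℂ) :=
  {t | (∀ i j : Fin N, (j : ℕ) = (i : ℕ) + 1 →
          (t i - t j).re > 2 * Lam η ℓ + max η.re 0 - τ.re) ∧
       ∀ i : Fin N, (i : ℕ) = N - 1 →
         (t i).re > Lam η ℓ + max (max (η / 2).re 0) (max (-xiP τ η ξp).re (-xiM η ξm).re) - τ.re}

/-- the cone `Q₊ ⊂ ℤ^N` spanned by the simple roots `e_i - e_{i+1}` and `e_N`. -/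
def Qplus {N : ℕ} : Set (Fin N → ℤ) :=
  {α | ∃ β : Fin N → ℕ, ∀ j : Fin N,
    α j = (β j : ℤ) -
      if _h : 0 < (j : ℕ) then
        (β ⟨(j : ℕ) - 1, lt_of_le_of_lt (Nat.sub_le _ _) j.isLt⟩ : ℤ)
      else 0}

/-- the cube `[0,π]^M` over which the contour integrals are iterated. -/
def box (M : ℕ) : Set (Fin M → ℝ) := Set.univ.pi fun _ => Set.Icc (0 : ℝ) Real.pi

/-- the point of the contour `C^γ_k(t)` with parameters `s ∈ [0,π]^M`. -/
def cpt {M N : ℕ} (k : Fin M → Fin N) (γ : Fin M → ℂ) (t : Fin N → ℂ) (s : Fin M → ℝ) :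
    Fin M → ℂ := fun i => t (k i) + γ i + (s i : ℂ) * I

/-- the iterated contour integral over `C^γ_k(t)`. -/
def contourIntegral {M N : ℕ} (k : Fin M → Fin N) (γ : Fin M → ℂ) (t : Fin N → ℂ)
    (f : (Fin M → ℂ) → ℂ) : ℂ :=
  I ^ M * ∫ s in box M, f (cpt k γ t s)

/-- nonvanishing of all denominators occurring in `w_k(x;t)/Φ_k(t)`. -/
def w0DenomOK (τ η ξp ξm : ℂ) {N M : ℕ} (ℓ : Fin N → ℂ) (k : Fin M → Fin N) (x : Fin M → ℂ)
    (t : Fin N → ℂ) : Prop :=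
  (∀ s : Fin N, ∀ i : Fin M,
      poch (qsq τ) (exp (-2 * (t s + x i + ℓ s * η))) ≠ 0 ∧
      poch (qsq τ) (exp (-2 * (t s - x i + ℓ s * η))) ≠ 0) ∧
  (∀ i : Fin M,
      poch (qsq τ) (exp (2 * (-xiP τ η ξp - x i))) ≠ 0 ∧
      poch (qsq τ) (exp (2 * (-xiM η ξm - x i))) ≠ 0) ∧
  (∀ i : Fin M, ∀ s : Fin N, k i ≤ s → theta (qsq τ) (exp (2 * (x i - t s + ℓ s * η))) ≠ 0) ∧
  ∀ i j : Fin M, i < j →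
      poch (qsq τ) (exp (-2 * (x i + x j - η))) ≠ 0 ∧
      poch (qsq τ) (exp (-2 * (x i - x j - η))) ≠ 0

/-- nonvanishing of the theta denominators of `Φ_k(t)`. -/
def PhiDenomOK (τ η ξp ξm : ℂ) {N M : ℕ} (ℓ : Fin N → ℂ) (k : Fin M → Fin N)
    (t : Fin N → ℂ) : Prop :=
  ∀ r, theta (qsq τ) (phiC η ξp ξm ℓ k r * exp (2 * t r)) ≠ 0

/-- nonvanishing of all sinh denominators occurring in `β_m(x;t)` (for any rearrangement `m`). -/
def betaDenomOK (η : ℂ) {N M : ℕ} (ℓ : Fin N → ℂ) (x : Fin M → ℂ) (t : Fin N → ℂ) : Prop :=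
  (∀ s : Fin N, ∀ i : Fin M,
      sinh (t s + x i - ℓ s * η) ≠ 0 ∧ sinh (t s - x i - ℓ s * η) ≠ 0) ∧
  ∀ i j : Fin M, i < j → sinh (x i + x j) ≠ 0 ∧ sinh (x i - x j) ≠ 0

/-! The function `θ` is quasi-periodic, `θ(p z) = -z⁻¹ θ(z)`. Hence `z ↦ θ(z) / θ(c z)` picks up the
factor `(-z⁻¹) / (-(c z)⁻¹) = c` under `z ↦ p z`. With `z = e^{2 t}` and `p = q²`, the shift
`t ↦ t + τ` is exactly `z ↦ p z`. -/

theorem multipliable_one_sub_mul_pow {R : Type*} [NormedCommRing R] [NormOneClass R]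
    [CompleteSpace R] {p : R} (hp : ‖p‖ < 1) (z : R) : Multipliable fun m : ℕ => 1 - z * p ^ m := by
  have hsum : Summable fun m : ℕ => ‖-(z * p ^ m)‖ := by
    simp only [norm_neg]
    exact ((summable_norm_geometric_of_norm_lt_one hp).mul_left ‖z‖).of_nonneg_of_le
      (fun _ => norm_nonneg _) fun _ => norm_mul_le _ _
  simpa only [sub_eq_add_neg] using multipliable_one_add_of_summable hsum

section Theta

variable {p z c : ℂ}

theorem poch_eq_one_sub_mul_poch (hp : ‖p‖ < 1) (z : ℂ) :
    poch p z = (1 - z) * poch p (p * z) := by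
  have hshift : (fun m : ℕ => 1 - z * p ^ (m + 1)) = fun m => 1 - p * z * p ^ m := by
    ext m; ring
  have hmul := multipliable_one_sub_mul_pow hp (p * z)
  rw [← hshift] at hmul
  rw [poch, tprod_eq_zero_mul' (f := fun m => 1 - z * p ^ m) hmul, hshift, pow_zero, mul_one, poch]

theorem theta_mul_left (hp0 : p ≠ 0) (hp : ‖p‖ < 1) (hz : z ≠ 0) :
    theta p (p * z) = -z⁻¹ * theta p z := by
  have hinv : p * (p * z)⁻¹ = z⁻¹ := by field_simp
  calc theta p (p * z)
      = poch p (p * z) * ((1 - z⁻¹) * poch p (p * z⁻¹)) := by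
        rw [theta, hinv, poch_eq_one_sub_mul_poch hp z⁻¹]
    _ = -z⁻¹ * ((1 - z) * poch p (p * z) * poch p (p * z⁻¹)) := by field_simp; ring
    _ = -z⁻¹ * theta p z := by rw [theta, ← poch_eq_one_sub_mul_poch hp z]

theorem theta_mul_left_ne_zero_iff (hp0 : p ≠ 0) (hp : ‖p‖ < 1) (hz : z ≠ 0) :
    theta p (p * z) ≠ 0 ↔ theta p z ≠ 0 := by
  rw [theta_mul_left hp0 hp hz, mul_ne_zero_iff_left (neg_ne_zero.mpr (inv_ne_zero hz))]

theorem theta_mul_left_div_theta_mul (hp0 : p ≠ 0) (hp : ‖p‖ < 1) (hc : c ≠ 0) (hz : z ≠ 0) :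
    theta p (p * z) / theta p (c * (p * z)) = c * (theta p z / theta p (c * z)) := by
  rw [mul_left_comm c p z, theta_mul_left hp0 hp hz, theta_mul_left hp0 hp (mul_ne_zero hc hz)]
  field_simp

end Theta

theorem qsq_ne_zero (τ : ℂ) : qsq τ ≠ 0 := exp_ne_zero _

theorem norm_qsq_lt_one {τ : ℂ} (hτ : τ.re < 0) : ‖qsq τ‖ < 1 := by
  have hre : (2 * τ).re = 2 * τ.re := by simp
  rw [qsq, norm_exp, Real.exp_lt_one_iff, hre]
  linarith

theorem exp_two_mul_add (t τ : ℂ) : exp (2 * (t + τ)) = qsq τ * exp (2 * t) := by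
  rw [mul_add, exp_add, mul_comm, qsq]

theorem phiC_ne_zero (η ξp ξm : ℂ) {N M : ℕ} (ℓ : Fin N → ℂ) (k : Fin M → Fin N) (r : Fin N) :
    phiC η ξp ξm ℓ k r ≠ 0 :=
  mul_ne_zero (Finset.prod_ne_zero_iff.mpr fun _ _ => exp_ne_zero _) (exp_ne_zero _)

/-- The theta quotient `∏ᵢ θ(e^{2 tᵢ}) / θ(cᵢ e^{2 tᵢ})` with arbitrary multipliers `cᵢ`; `Φ_k` is
the case `cᵢ = φ_{k;i}`. Multipliers are units because `θ` is only meaningful at nonzero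
arguments. -/
def thetaQuotient {ι : Type*} [Fintype ι] (τ : ℂ) (c : ι → ℂˣ) (t : ι → ℂ) : ℂ :=
  ∏ i, theta (qsq τ) (exp (2 * t i)) / theta (qsq τ) (c i * exp (2 * t i))

theorem stmt1_general {ι : Type*} [Fintype ι] [DecidableEq ι] {τ : ℂ} (hτ : τ.re < 0)
    (c : ι → ℂˣ) (r : ι) (t : ι → ℂ) (ht : ∀ i, theta (qsq τ) (c i * exp (2 * t i)) ≠ 0) :
    (∀ i, theta (qsq τ) (c i * exp (2 * (t + Pi.single r τ : ι → ℂ) i)) ≠ 0) ∧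
      thetaQuotient τ c (t + Pi.single r τ) = c r * thetaQuotient τ c t := by
  have hp0 := qsq_ne_zero τ
  have hp := norm_qsq_lt_one hτ
  constructor
  · intro i
    obtain rfl | hi := eq_or_ne i r
    · rw [Pi.add_apply, Pi.single_eq_same, exp_two_mul_add, mul_left_comm,
        theta_mul_left_ne_zero_iff hp0 hp (mul_ne_zero (c i).ne_zero (exp_ne_zero _))]
      exact ht i
    · simpa only [Pi.add_apply, Pi.single_eq_of_ne hi, add_zero] using ht i
  · have hfactor (i : ι) :
        theta (qsq τ) (exp (2 * (t + Pi.single r τ : ι → ℂ) i)) /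
            theta (qsq τ) (c i * exp (2 * (t + Pi.single r τ : ι → ℂ) i)) =
          (Pi.mulSingle r (c r : ℂ) : ι → ℂ) i *
            (theta (qsq τ) (exp (2 * t i)) / theta (qsq τ) (c i * exp (2 * t i))) := by
      obtain rfl | hi := eq_or_ne i r
      · rw [Pi.add_apply, Pi.single_eq_same, Pi.mulSingle_eq_same, exp_two_mul_add,
          theta_mul_left_div_theta_mul hp0 hp (c i).ne_zero (exp_ne_zero _)]
      · simp only [Pi.add_apply, Pi.single_eq_of_ne hi, Pi.mulSingle_eq_of_ne hi, add_zero, one_mul]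
    simp only [thetaQuotient, hfactor, Finset.prod_mul_distrib, Fintype.prod_pi_mulSingle']

/-- the explicit theta quotient `Φ_k` solves the scalar difference
equations `Φ(t + τ e_r) = φ_{k;r} Φ(t)`. -/
theorem stmt1 (τ η ξp ξm : ℂ) (hτ : τ.re < 0) (M N : ℕ) (hN : 1 ≤ N)
    (ℓ : Fin N → ℂ) (k : Fin M → Fin N) (hk : Monotone k) (r : Fin N) (t : Fin N → ℂ)
    (h1 : ∀ r' : Fin N, theta (qsq τ) (phiC η ξp ξm ℓ k r' * exp (2 * t r')) ≠ 0)
    (h2 : theta (qsq τ) (phiC η ξp ξm ℓ k r * exp (2 * (t r + τ))) ≠ 0) :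
    PhiF τ η ξp ξm ℓ k (fun s => t s + if s = r then τ else 0) =
      phiC η ξp ξm ℓ k r * PhiF τ η ξp ξm ℓ k t := by
  simpa only [PhiF, thetaQuotient, Pi.add_def, Pi.single_apply, Units.val_mk0] using
    (stmt1_general hτ (fun s => Units.mk0 _ (phiC_ne_zero η ξp ξm ℓ k s)) r t h1).2

end BQKZ
end
end

section
/- Let M ≥ 0, N ≥ 1, k ∈ I_{M,N} and r ∈ {1,…,N}. Then n_k(r) · (2 ∑_{s>r} n_k(s) + n_k(r) − 1) = 2 · ∑_{i=1, k_i=r}^{M} (M − i), i.e. twice the sum of M − i over all indices i with k_i = r. -/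
open Complex MeasureTheory

noncomputable section

namespace BQKZ

/-! For `k` monotone and `k i = r`, the `M - i` positions after `i` are those with an entry above `r`
together with the later positions of the fibre over `r`. Summed over the fibre, the former contribute
`n_k(r) ∑_{s>r} n_k(s)`, while the latter run through the pairs of distinct positions in the fibre,
each counted once. -/

section CountingAfter

open Finset

variable {ι α : Type*} [LinearOrder ι]

lemma sum_card_filter_lt (s : Finset ι) : ∑ i ∈ s, #{j ∈ s | i < j} = (#s).choose 2 := by
  induction s using Finset.induction_on_min with
  | empty => rfl
  | insert a s ha ih =>
    have ha_notMem : a ∉ s := fun h => lt_irrefl a (ha a h)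
    have after_min : #{j ∈ insert a s | a < j} = #s := by
      rw [filter_insert, if_neg (lt_irrefl a), filter_true_of_mem ha]
    have after_other : ∀ i ∈ s, #{j ∈ insert a s | i < j} = #{j ∈ s | i < j} := fun i hi => by
      rw [filter_insert, if_neg (ha i hi).not_gt]
    rw [sum_insert ha_notMem, after_min, sum_congr rfl after_other, ih,
      card_insert_of_notMem ha_notMem, Nat.choose_succ_succ', Nat.choose_one_right]

variable [Fintype ι] [LocallyFiniteOrderTop ι] [PartialOrder α] [DecidableEq α]
  [LocallyFiniteOrderTop α] {k : ι → α}

lemma card_Ioi_of_monotone (hk : Monotone k) (i : ι) :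
    #(Ioi i) =
      #{j ∈ ({j | k j = k i} : Finset ι) | i < j} + ∑ s ∈ Ioi (k i), #{j | k j = s} := by
  have same_value : {j ∈ Ioi i | k j = k i} = {j ∈ ({j | k j = k i} : Finset ι) | i < j} := by
    ext j
    simp only [mem_filter, mem_Ioi, mem_univ, true_and, and_comm]
  have larger_value : {j ∈ Ioi i | ¬k j = k i} = ({j | k j ∈ Ioi (k i)} : Finset ι) := by
    ext j
    simp only [mem_filter, mem_Ioi, mem_univ, true_and]
    constructor
    · rintro ⟨hij, hne⟩
      exact (hk hij.le).lt_of_ne' hne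
    · intro hlt
      exact ⟨hk.reflect_lt hlt, hlt.ne'⟩
  rw [← card_filter_add_card_filter_not (fun j => k j = k i), same_value, larger_value,
    sum_card_fiberwise_eq_card_filter]

theorem stmt2_general (hk : Monotone k) (r : α) :
    (#{i | k i = r} : ℤ) * (2 * ∑ s ∈ Ioi r, (#{i | k i = s} : ℤ) + #{i | k i = r} - 1) =
      2 * ∑ i with k i = r, (#(Ioi i) : ℤ) := by
  set A : Finset ι := {i | k i = r}
  set b : ℕ := ∑ s ∈ Ioi r, #{i | k i = s} with hb
  have card_after : ∀ i ∈ A, #(Ioi i) = #{j ∈ A | i < j} + b := by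
    intro i hi
    obtain rfl : k i = r := (mem_filter_univ i).1 hi
    exact card_Ioi_of_monotone hk i
  have sum_after : ∑ i ∈ A, #(Ioi i) = (#A).choose 2 + #A * b := by
    rw [sum_congr rfl card_after, sum_add_distrib, sum_card_filter_lt, sum_const, smul_eq_mul]
  have two_mul_choose : 2 * ((#A).choose 2 : ℤ) = #A * (#A - 1) := by
    qify
    rw [Nat.cast_choose_two]
    ring
  rw [← Nat.cast_sum, ← Nat.cast_sum, ← hb, sum_after]
  push_cast
  linear_combination -two_mul_choose

lemma cast_card_Ioi_fin {M : ℕ} (i : Fin M) : (#(Ioi i) : ℤ) = M - ((i : ℕ) + 1) := by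
  rw [Fin.card_Ioi]
  omega

end CountingAfter

/-- `n_k(r)·(2 ∑_{s>r} n_k(s) + n_k(r) − 1) = 2 ∑_{i : k_i = r} (M − i)`. -/
theorem stmt2 (M N : ℕ) (hN : 1 ≤ N) (k : Fin M → Fin N) (hk : Monotone k) (r : Fin N) :
    (nk k r : ℤ) *
        (2 * (∑ s ∈ Finset.univ.filter fun s : Fin N => r < s, (nk k s : ℤ)) + (nk k r : ℤ) - 1) =
      2 * ∑ i ∈ Finset.univ.filter fun i : Fin M => k i = r, ((M : ℤ) - ((i : ℕ) + 1)) := by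
  simpa only [nk, cast_card_Ioi_fin, Finset.filter_lt_eq_Ioi] using stmt2_general hk r

end BQKZ
end
end
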